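/- Let f : V → [0,∞] be weakly lower semicontinuous on a separable real Hilbert space V, let A : V → W be a nonzero bounded linear operator, set γ = ‖A‖², let d ∈ W, and define 𝒥(x) = f(x) + ½‖Ax−d‖²_W and 𝒥_γ(x) = S_γ²(f)(x) + ½‖Ax−d‖²_W. Let G be the set of global minimizers of 𝒥 and G_γ the set of global minimizers of 𝒥_γ. Then G ⊆ G_γ, and every connected component of G_γ contains a point of G. -/

import Mathlib

open scoped InnerProductSpace RealInnerProductSpace ENNReal Topology
open Filter

noncomputable section

/-- The S-transform `S_γ(f)(y) = sup_x ( -f(x) - (γ/2)‖x-y‖² )` for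
extended-real-valued functions on a real inner product space. -/
def SgammaE {V : Type*} [NormedAddCommGroup V] [InnerProductSpace ℝ V]
    (γ : ℝ) (f : V → EReal) (y : V) : EReal :=
  ⨆ x : V, (-(f x) - (((γ / 2) * ‖x - y‖ ^ 2 : ℝ) : EReal))

/-- The S-transform of a `[0,∞]`-valued function. -/
def Sgamma {V : Type*} [NormedAddCommGroup V] [InnerProductSpace ℝ V]
    (γ : ℝ) (f : V → ℝ≥0∞) (y : V) : EReal :=
  SgammaE γ (fun x => (f x : EReal)) y

/-- The twice iterated S-transform `S_γ²(f) = S_γ(S_γ(f))`. -/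
def Sgamma2 {V : Type*} [NormedAddCommGroup V] [InnerProductSpace ℝ V]
    (γ : ℝ) (f : V → ℝ≥0∞) : V → EReal :=
  SgammaE γ (Sgamma γ f)

/-- Convexity for extended-real-valued functions. -/
def EConvexOn {V : Type*} [NormedAddCommGroup V] [InnerProductSpace ℝ V]
    (h : V → EReal) : Prop :=
  ∀ x y : V, ∀ a b : ℝ, 0 ≤ a → 0 ≤ b → a + b = 1 →
    h (a • x + b • y) ≤ (a : EReal) * h x + (b : EReal) * h y

/-!
The argument is one of majorization. Since `‖A‖² ≤ γ`, the graph of `½‖A · - d‖²` is touched from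
above at every point `x` by a paraboloid `(γ/2)‖· - c‖² + κ`. Replacing `½‖A · - d‖²` by this
paraboloid, the objectives built from `f` and from `S_γ²(f)` have the same infimum, and weak lower
semicontinuity provides a point `z` where the first one, hence also the second one, attains it.
If `x ∈ G_γ`, comparing with the paraboloid gives `z ∈ G`. Moreover, the second objective is a
supremum of affine functions, so its minimizers form a convex set; this set contains `x` and `z`
and lies in `G_γ`, which therefore contains the segment from `x` to `z`.
-/

section GlobalMinimizers

variable {α β : Type*} [Preorder β]

/-- The set of global minimizers of `J`. -/
def globalMinimizers (J : α → β) : Set α :=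
  {x | ∀ y, J x ≤ J y}

theorem mem_globalMinimizers_of_touching {J M : α → β} (hle : ∀ y, J y ≤ M y) {x : α}
    (hx : M x = J x) (hxJ : x ∈ globalMinimizers J) : x ∈ globalMinimizers M :=
  fun y => hx.trans_le ((hxJ y).trans (hle y))

theorem globalMinimizers_subset_of_touching {J M : α → β} (hle : ∀ y, J y ≤ M y) {x : α}
    (hx : M x = J x) (hxJ : x ∈ globalMinimizers J) :
    globalMinimizers M ⊆ globalMinimizers J :=
  fun y hy w => (hle y).trans ((hy x).trans (hx.trans_le (hxJ w)))

theorem globalMinimizers_add_coe (J : α → EReal) (κ : ℝ) :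
    globalMinimizers (fun y => J y + κ) = globalMinimizers J := by
  simp only [globalMinimizers, (EReal.addLECancellable_coe κ).add_le_add_iff_right]

theorem convex_globalMinimizers {E : Type*} [AddCommMonoid E] [Module ℝ E] {J : E → β}
    (hJ : QuasiconvexOn ℝ Set.univ J) : Convex ℝ (globalMinimizers J) := by
  simpa [globalMinimizers, Set.ofPred_forall] using convex_iInter fun w => hJ (J w)

theorem nonempty_globalMinimizers_of_tendsto_cocompact {X γ : Type*} [TopologicalSpace X]
    [Nonempty X] [LinearOrder γ] [OrderTop γ] [TopologicalSpace γ] [OrderTopology γ] {J : X → γ}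
    (hJ : LowerSemicontinuous J) (hlim : Tendsto J (cocompact X) (𝓝 ⊤)) :
    (globalMinimizers J).Nonempty := by
  by_cases htop : ∀ x, J x = ⊤
  · exact ⟨Classical.arbitrary X, fun y => by rw [htop y]; exact le_top⟩
  obtain ⟨x₀, hx₀⟩ := not_forall.1 htop
  obtain ⟨K, hK, hJK⟩ := mem_cocompact.1 (hlim.eventually_const_lt (lt_top_iff_ne_top.2 hx₀))
  obtain ⟨z, -, hz⟩ := LowerSemicontinuousOn.exists_isMinOn (Set.insert_nonempty x₀ K)
    (hK.insert x₀) (hJ.lowerSemicontinuousOn _)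
  refine ⟨z, fun y => ?_⟩
  by_cases hy : y ∈ K
  · exact hz (Set.mem_insert_of_mem x₀ hy)
  · exact (hz (Set.mem_insert x₀ K)).trans (le_of_lt (hJK hy))

end GlobalMinimizers

section WeakTopology

variable {𝕜 : Type*} [RCLike 𝕜]

theorem lowerSemicontinuous_comp_toWeakSpace_symm {E β : Type*} [AddCommGroup E] [Module 𝕜 E]
    [Module ℝ E] [IsScalarTower ℝ 𝕜 E] [TopologicalSpace E] [IsTopologicalAddGroup E]
    [ContinuousSMul 𝕜 E] [LocallyConvexSpace ℝ E] [LinearOrder β] {g : E → β}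
    (hconv : QuasiconvexOn ℝ Set.univ g) (hlsc : LowerSemicontinuous g) :
    LowerSemicontinuous (g ∘ (toWeakSpace 𝕜 E).symm) := by
  refine lowerSemicontinuous_iff_isClosed_preimage.2 fun r => ?_
  have hconv_sublevel : Convex ℝ (g ⁻¹' Set.Iic r) := by
    simpa [Set.preimage, Set.mem_Iic] using hconv r
  have himage : g ∘ (toWeakSpace 𝕜 E).symm ⁻¹' Set.Iic r =
      toWeakSpace 𝕜 E '' closure (g ⁻¹' Set.Iic r) := by
    rw [(hlsc.isClosed_preimage r).closure_eq, Set.preimage_comp]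
    exact ((toWeakSpace 𝕜 E).image_eq_preimage_symm _).symm
  rw [himage, hconv_sublevel.toWeakSpace_closure (𝕜 := 𝕜)]
  exact isClosed_closure

theorem tendsto_toWeakSpace_symm_cocompact {E : Type*} [NormedAddCommGroup E] [NormedSpace 𝕜 E]
    (hE : Function.Surjective (NormedSpace.inclusionInDoubleDual 𝕜 E)) :
    Tendsto (toWeakSpace 𝕜 E).symm (cocompact (WeakSpace 𝕜 E)) (Bornology.cobounded E) := by
  intro s hs
  have hsurj : Function.Surjective (NormedSpace.inclusionInDoubleDualWeak 𝕜 E) := hE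
  have hcompact : IsCompact (closure (toWeakSpace 𝕜 E '' sᶜ)) := by
    refine NormedSpace.isCompact_closure_of_isBounded 𝕜 E _ ?_ ?_
    · rw [Set.preimage_image_eq _ (toWeakSpace 𝕜 E).injective]
      exact Bornology.isBounded_compl_iff.2 hs
    · rw [hsurj.range_eq]
      exact Set.subset_univ _
  refine (mem_cocompact' (X := WeakSpace 𝕜 E)).2 ⟨_, hcompact, ?_⟩
  rw [LinearEquiv.image_eq_preimage_symm, Set.preimage_compl]
  exact subset_closure

theorem surjective_inclusionInDoubleDual {E : Type*} [NormedAddCommGroup E]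
    [InnerProductSpace 𝕜 E] [CompleteSpace E] :
    Function.Surjective (NormedSpace.inclusionInDoubleDual 𝕜 E) := by
  intro φ
  let ψ : StrongDual 𝕜 E := (starL 𝕜 : 𝕜 ≃L⋆[𝕜] 𝕜).toContinuousLinearMap.comp
    (φ.comp (InnerProductSpace.toDual 𝕜 E).toContinuousLinearEquiv.toContinuousLinearMap)
  refine ⟨(InnerProductSpace.toDual 𝕜 E).symm ψ, ?_⟩
  ext l
  obtain ⟨y, rfl⟩ := (InnerProductSpace.toDual 𝕜 E).surjective l
  rw [NormedSpace.dual_def, InnerProductSpace.toDual_apply_apply, ← inner_conj_symm,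
    InnerProductSpace.toDual_symm_apply]
  simp [ψ]

end WeakTopology

section ProxObjective

variable {V : Type*} [SeminormedAddCommGroup V]

/-- The objective `F + (γ/2)‖· - c‖²`, whose global minimizers are the proximal points of `F`
at `c` and whose infimum is the Moreau envelope of `F` at `c`. -/
def proxObjective (γ : ℝ) (F : V → EReal) (c y : V) : EReal :=
  F y + ((γ / 2 * ‖y - c‖ ^ 2 : ℝ) : EReal)

theorem lowerSemicontinuous_proxObjective [NormedSpace ℝ V] {γ : ℝ} (hγ : 0 ≤ γ) {F : V → EReal}
    (hF : LowerSemicontinuous (F ∘ (toWeakSpace ℝ V).symm)) (c : V) :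
    LowerSemicontinuous (proxObjective γ F c ∘ (toWeakSpace ℝ V).symm) := by
  have hconv : QuasiconvexOn ℝ Set.univ
      fun y : V => ((γ / 2 * ‖y - c‖ ^ 2 : ℝ) : EReal) := by
    have hsq : ConvexOn ℝ Set.univ fun y : V => γ / 2 * ‖y - c‖ ^ 2 := by
      simpa only [dist_eq_norm, smul_eq_mul, Pi.pow_apply] using
        ((convexOn_univ_dist c).pow (fun _ _ => dist_nonneg) 2).smul (show 0 ≤ γ / 2 by positivity)
    exact hsq.quasiconvexOn.monotone_comp (g := Real.toEReal) EReal.coe_strictMono.monotone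
  refine hF.add' (lowerSemicontinuous_comp_toWeakSpace_symm hconv
    (continuous_coe_real_ereal.comp (by fun_prop)).lowerSemicontinuous) fun x => ?_
  exact EReal.continuousAt_add (.inr (EReal.coe_ne_bot _)) (.inr (EReal.coe_ne_top _))

theorem tendsto_proxObjective_cobounded {γ : ℝ} (hγ : 0 < γ) {F : V → EReal} {m : ℝ}
    (hF : ∀ x, (m : EReal) ≤ F x) (c : V) :
    Tendsto (proxObjective γ F c) (Bornology.cobounded V) (𝓝 ⊤) := by
  have hnorm : Tendsto (fun y : V => ‖y - c‖) (Bornology.cobounded V) atTop := by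
    simpa only [dist_eq_norm] using Metric.tendsto_dist_right_cobounded_atTop c
  have hreal : Tendsto (fun y : V => m + γ / 2 * ‖y - c‖ ^ 2) (Bornology.cobounded V) atTop :=
    tendsto_atTop_add_const_left _ _
      (((tendsto_pow_atTop two_ne_zero).comp hnorm).const_mul_atTop (half_pos hγ))
  refine tendsto_nhds_top_mono' (EReal.tendsto_coe_atTop.comp hreal) fun y => ?_
  exact (EReal.coe_add _ _).trans_le (add_le_add_left (hF y) _)

/-- Every point of the graph of `h` is touched from above by a paraboloid
`(γ/2)‖· - c‖² + κ` of opening `γ`. -/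
def HasParaboloidMajorants (γ : ℝ) (h : V → ℝ) : Prop :=
  ∀ x, ∃ (c : V) (κ : ℝ), h x = γ / 2 * ‖x - c‖ ^ 2 + κ ∧
    ∀ y, h y ≤ γ / 2 * ‖y - c‖ ^ 2 + κ

theorem add_coe_le_proxObjective_add_coe {γ : ℝ} {F : V → EReal} {h : V → ℝ} {c y : V} {κ : ℝ}
    (hy : h y ≤ γ / 2 * ‖y - c‖ ^ 2 + κ) :
    F y + h y ≤ proxObjective γ F c y + κ := by
  rw [proxObjective, add_assoc, ← EReal.coe_add]
  exact add_le_add_right (EReal.coe_le_coe hy) _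

theorem proxObjective_add_coe_eq_add_coe {γ : ℝ} {F : V → EReal} {h : V → ℝ} {c x : V} {κ : ℝ}
    (hx : h x = γ / 2 * ‖x - c‖ ^ 2 + κ) :
    proxObjective γ F c x + κ = F x + h x := by
  rw [proxObjective, add_assoc, ← EReal.coe_add, hx]

end ProxObjective

section STransform

variable {V : Type*} [NormedAddCommGroup V] [InnerProductSpace ℝ V]

theorem neg_SgammaE (γ : ℝ) (F : V → EReal) (c : V) :
    -SgammaE γ F c = ⨅ y, proxObjective γ F c y := by
  have hneg (y : V) : -(-F y - ((γ / 2 * ‖y - c‖ ^ 2 : ℝ) : EReal)) = proxObjective γ F c y := by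
    rw [EReal.neg_sub (.inr (EReal.coe_ne_bot _)) (.inr (EReal.coe_ne_top _)), neg_neg,
      proxObjective]
  simp only [← hneg]
  exact EReal.negOrderIso.map_iSup _

theorem SgammaE_SgammaE_le (γ : ℝ) (F : V → EReal) (x : V) :
    SgammaE γ (SgammaE γ F) x ≤ F x := by
  refine iSup_le fun c => EReal.sub_le_of_le_add ?_
  rw [neg_SgammaE, norm_sub_rev]
  exact iInf_le _ x

theorem iInf_proxObjective_le (γ : ℝ) (F : V → EReal) (c x : V) :
    ⨅ y, proxObjective γ F c y ≤ proxObjective γ (SgammaE γ (SgammaE γ F)) c x := by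
  rw [← neg_SgammaE, proxObjective, norm_sub_rev,
    ← EReal.sub_le_iff_le_add (.inl (EReal.coe_ne_bot _)) (.inl (EReal.coe_ne_top _))]
  exact le_iSup (fun w => -SgammaE γ F w - ((γ / 2 * ‖w - x‖ ^ 2 : ℝ) : EReal)) c

theorem proxObjective_le_of_mem_globalMinimizers {γ : ℝ} {F : V → EReal} {c z : V}
    (hz : z ∈ globalMinimizers (proxObjective γ F c)) (x : V) :
    proxObjective γ F c z ≤ proxObjective γ (SgammaE γ (SgammaE γ F)) c x :=
  (le_iInf hz).trans (iInf_proxObjective_le γ F c x)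

theorem globalMinimizers_proxObjective_subset (γ : ℝ) (F : V → EReal) (c : V) :
    globalMinimizers (proxObjective γ F c) ⊆
      globalMinimizers (proxObjective γ (SgammaE γ (SgammaE γ F)) c) :=
  fun z hz x => (add_le_add_left (SgammaE_SgammaE_le γ F z) _).trans
    (proxObjective_le_of_mem_globalMinimizers hz x)

-- The quadratic terms in `y` cancel, so `proxObjective γ (SgammaE γ G) c` is a supremum of
-- affine functions of `y`.
theorem quasiconvexOn_proxObjective_SgammaE (γ : ℝ) (G : V → EReal) (c : V) :
    QuasiconvexOn ℝ Set.univ (proxObjective γ (SgammaE γ G) c) := by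
  let l (w : V) : V →L[ℝ] ℝ := γ • innerSL ℝ (w - c)
  let a (w : V) : ℝ := γ / 2 * (‖c‖ ^ 2 - ‖w‖ ^ 2)
  have hquad (w y : V) : γ / 2 * ‖y - c‖ ^ 2 - γ / 2 * ‖w - y‖ ^ 2 = l w y + a w := by
    simp only [l, a, FunLike.coe_smul, Pi.smul_apply, innerSL_apply_apply, smul_eq_mul,
      norm_sub_sq_real, inner_sub_left, real_inner_comm c y]
    ring
  have hle_iff (r : EReal) (y : V) : proxObjective γ (SgammaE γ G) c y ≤ r ↔
      ∀ w, -G w + ((l w y + a w : ℝ) : EReal) ≤ r := by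
    rw [proxObjective, ← EReal.le_sub_iff_add_le (.inl (EReal.coe_ne_bot _))
      (.inl (EReal.coe_ne_top _)), SgammaE, iSup_le_iff]
    refine forall_congr' fun w => ?_
    rw [EReal.le_sub_iff_add_le (.inl (EReal.coe_ne_bot _)) (.inl (EReal.coe_ne_top _)), ← hquad,
      sub_eq_add_neg, add_assoc, ← EReal.coe_neg, ← EReal.coe_add, neg_add_eq_sub]
  have hquasi (w : V) :
      QuasiconvexOn ℝ Set.univ fun y => -G w + ((l w y + a w : ℝ) : EReal) :=
    ((l w).toLinearMap.convexOn convex_univ).quasiconvexOn.monotone_comp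
      (g := fun t : ℝ => -G w + ((t + a w : ℝ) : EReal)) fun s t hst =>
        add_le_add_right (EReal.coe_le_coe (add_le_add_left hst _)) _
  intro r
  simpa only [Set.mem_univ, true_and, hle_iff, Set.ofPred_forall] using
    convex_iInter fun w => hquasi w r

theorem nonempty_globalMinimizers_proxObjective [CompleteSpace V] {γ : ℝ} (hγ : 0 < γ)
    {F : V → EReal} (hF : LowerSemicontinuous (F ∘ (toWeakSpace ℝ V).symm)) {m : ℝ}
    (hm : ∀ x, (m : EReal) ≤ F x) (c : V) :
    (globalMinimizers (proxObjective γ F c)).Nonempty := by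
  obtain ⟨z, hz⟩ := nonempty_globalMinimizers_of_tendsto_cocompact
    (lowerSemicontinuous_proxObjective hγ.le hF c)
    ((tendsto_proxObjective_cobounded hγ hm c).comp
      (tendsto_toWeakSpace_symm_cocompact surjective_inclusionInDoubleDual))
  exact ⟨(toWeakSpace ℝ V).symm z, fun y => hz (toWeakSpace ℝ V y)⟩

end STransform

section Majorants

variable {V W : Type*} [NormedAddCommGroup V] [InnerProductSpace ℝ V]

theorem exists_eq_add_half_mul_sq_norm_sub [CompleteSpace V] {γ : ℝ} (hγ : γ ≠ 0)
    (l : StrongDual ℝ V) (x : V) : ∃ (c : V) (κ : ℝ), ∀ y,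
      l (y - x) + γ / 2 * ‖y - x‖ ^ 2 = γ / 2 * ‖y - c‖ ^ 2 + κ := by
  let g : V := γ⁻¹ • (InnerProductSpace.toDual ℝ V).symm l
  refine ⟨x - g, -(γ / 2 * ‖g‖ ^ 2), fun y => ?_⟩
  have hl : l (y - x) = γ * ⟪y - x, g⟫ := by
    rw [real_inner_smul_right, real_inner_comm, InnerProductSpace.toDual_symm_apply,
      mul_inv_cancel_left₀ hγ]
  rw [hl, ← sub_add, norm_add_sq_real]
  ring

theorem hasParaboloidMajorants_half_sq_norm_sub [CompleteSpace V] [NormedAddCommGroup W]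
    [InnerProductSpace ℝ W] {γ : ℝ} (hγ : 0 < γ) (A : V →L[ℝ] W) (hA : ‖A‖ ^ 2 ≤ γ) (d : W) :
    HasParaboloidMajorants γ fun x => 1 / 2 * ‖A x - d‖ ^ 2 := by
  intro x
  let l : StrongDual ℝ V := (innerSL ℝ (A x - d)).comp A
  obtain ⟨c, κ, hcκ⟩ := exists_eq_add_half_mul_sq_norm_sub hγ.ne' l x
  refine ⟨c, κ + 1 / 2 * ‖A x - d‖ ^ 2, ?_, fun y => ?_⟩
  · have := hcκ x
    simp only [sub_self, map_zero, norm_zero] at this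
    linarith
  have hexpand : ‖A y - d‖ ^ 2 = ‖A x - d‖ ^ 2 + 2 * l (y - x) + ‖A (y - x)‖ ^ 2 := by
    rw [← sub_add_sub_cancel' (A x) d (A y), ← map_sub, norm_add_sq_real]
    rfl
  have hbound : ‖A (y - x)‖ ^ 2 ≤ γ * ‖y - x‖ ^ 2 :=
    calc ‖A (y - x)‖ ^ 2 ≤ (‖A‖ * ‖y - x‖) ^ 2 := by gcongr; exact A.le_opNorm _
      _ = ‖A‖ ^ 2 * ‖y - x‖ ^ 2 := mul_pow _ _ _
      _ ≤ γ * ‖y - x‖ ^ 2 := by gcongr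
  linarith [hcκ y]

variable {γ : ℝ} {F : V → EReal} {h : V → ℝ}

theorem add_coe_le_SgammaE_SgammaE_add_coe {c x z : V} {κ : ℝ}
    (hx : h x = γ / 2 * ‖x - c‖ ^ 2 + κ) (hle : h z ≤ γ / 2 * ‖z - c‖ ^ 2 + κ)
    (hz : z ∈ globalMinimizers (proxObjective γ F c)) :
    F z + h z ≤ SgammaE γ (SgammaE γ F) x + h x :=
  calc F z + h z ≤ proxObjective γ F c z + κ := add_coe_le_proxObjective_add_coe hle
    _ ≤ proxObjective γ (SgammaE γ (SgammaE γ F)) c x + κ :=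
      add_le_add_left (proxObjective_le_of_mem_globalMinimizers hz x) _
    _ = SgammaE γ (SgammaE γ F) x + h x := proxObjective_add_coe_eq_add_coe hx

theorem globalMinimizers_add_subset (hh : HasParaboloidMajorants γ h)
    (hF : ∀ c, (globalMinimizers (proxObjective γ F c)).Nonempty) :
    globalMinimizers (fun x => F x + h x) ⊆
      globalMinimizers fun x => SgammaE γ (SgammaE γ F) x + h x := by
  intro x hx y
  obtain ⟨c, κ, hy, hle⟩ := hh y
  obtain ⟨z, hz⟩ := hF c
  calc SgammaE γ (SgammaE γ F) x + h x ≤ F x + h x :=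
        add_le_add_left (SgammaE_SgammaE_le γ F x) _
    _ ≤ F z + h z := hx z
    _ ≤ SgammaE γ (SgammaE γ F) y + h y := add_coe_le_SgammaE_SgammaE_add_coe hy (hle z) hz

theorem exists_mem_globalMinimizers_segment_subset (hh : HasParaboloidMajorants γ h)
    (hF : ∀ c, (globalMinimizers (proxObjective γ F c)).Nonempty) {x : V}
    (hx : x ∈ globalMinimizers fun x => SgammaE γ (SgammaE γ F) x + h x) :
    ∃ z ∈ globalMinimizers fun x => F x + h x,
      segment ℝ x z ⊆ globalMinimizers fun x => SgammaE γ (SgammaE γ F) x + h x := by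
  obtain ⟨c, κ, hxc, hle⟩ := hh x
  obtain ⟨z, hz⟩ := hF c
  refine ⟨z, fun y => ?_, ?_⟩
  · exact (add_coe_le_SgammaE_SgammaE_add_coe hxc (hle z) hz).trans
      ((hx y).trans (add_le_add_left (SgammaE_SgammaE_le γ F y) _))
  · have hmaj (y : V) := add_coe_le_proxObjective_add_coe (F := SgammaE γ (SgammaE γ F)) (hle y)
    have htouch := proxObjective_add_coe_eq_add_coe (F := SgammaE γ (SgammaE γ F)) hxc
    have hxmin := mem_globalMinimizers_of_touching hmaj htouch hx
    have hsub := globalMinimizers_subset_of_touching hmaj htouch hx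
    rw [globalMinimizers_add_coe] at hxmin hsub
    exact ((convex_globalMinimizers (quasiconvexOn_proxObjective_SgammaE γ _ c)).segment_subset
      hxmin (globalMinimizers_proxObjective_subset γ F c hz)).trans hsub

end Majorants

theorem mem_connectedComponentIn_of_segment_subset {E : Type*} [AddCommGroup E] [Module ℝ E]
    [TopologicalSpace E] [ContinuousAdd E] [ContinuousSMul ℝ E] {s : Set E} {x z : E}
    (h : segment ℝ x z ⊆ s) : z ∈ connectedComponentIn s x :=
  (convex_segment x z).isPreconnected.subset_connectedComponentIn (left_mem_segment ℝ x z) h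
    (right_mem_segment ℝ x z)

theorem statement18_general {V W : Type*} [NormedAddCommGroup V] [InnerProductSpace ℝ V]
    [CompleteSpace V] [NormedAddCommGroup W] [InnerProductSpace ℝ W]
    (f : V → ℝ≥0∞) (hwlsc : LowerSemicontinuous (α := WeakSpace ℝ V) f)
    {γ : ℝ} (hγ : 0 < γ) (A : V →L[ℝ] W) (hA : ‖A‖ ^ 2 ≤ γ) (d : W) :
    (globalMinimizers (fun x => (f x : EReal) + ((1 / 2 * ‖A x - d‖ ^ 2 : ℝ) : EReal)) ⊆
      globalMinimizers fun x => Sgamma2 γ f x + ((1 / 2 * ‖A x - d‖ ^ 2 : ℝ) : EReal)) ∧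
    ∀ x ∈ globalMinimizers fun x => Sgamma2 γ f x + ((1 / 2 * ‖A x - d‖ ^ 2 : ℝ) : EReal),
      ∃ z ∈ globalMinimizers fun x => (f x : EReal) + ((1 / 2 * ‖A x - d‖ ^ 2 : ℝ) : EReal),
        segment ℝ x z ⊆
          globalMinimizers fun x => Sgamma2 γ f x + ((1 / 2 * ‖A x - d‖ ^ 2 : ℝ) : EReal) := by
  have hlsc : LowerSemicontinuous ((fun x => (f x : EReal)) ∘ (toWeakSpace ℝ V).symm) :=
    continuous_coe_ennreal_ereal.comp_lowerSemicontinuous hwlsc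
      EReal.coe_ennreal_strictMono.monotone
  have hprox (c : V) := nonempty_globalMinimizers_proxObjective hγ hlsc (m := 0)
    (fun x => EReal.coe_ennreal_nonneg (f x)) c
  have hmaj := hasParaboloidMajorants_half_sq_norm_sub hγ A hA d
  exact ⟨globalMinimizers_add_subset hmaj hprox,
    fun x hx => exists_mem_globalMinimizers_segment_subset hmaj hprox hx⟩

/-- case `γ = ‖A‖²`. With `f` weakly l.s.c., `A ≠ 0`, `γ = ‖A‖²`,
`𝒥(x) = f(x) + ½‖Ax-d‖²` and `𝒥_γ(x) = S_γ²(f)(x) + ½‖Ax-d‖²`: the set `G` of global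
minimizers of `𝒥` is contained in the set `G_γ` of global minimizers of `𝒥_γ`, and every
connected component of `G_γ` contains a point of `G`. -/
theorem statement18 {V W : Type*}
    [NormedAddCommGroup V] [InnerProductSpace ℝ V] [CompleteSpace V]
    [TopologicalSpace.SeparableSpace V]
    [NormedAddCommGroup W] [InnerProductSpace ℝ W] [CompleteSpace W]
    [TopologicalSpace.SeparableSpace W]
    (f : V → ℝ≥0∞) (hwlsc : LowerSemicontinuous (α := WeakSpace ℝ V) f)
    (A : V →L[ℝ] W) (hA : A ≠ 0) (d : W) :
    ({x : V | ∀ y : V,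
        (f x : EReal) + ((1 / 2 * ‖A x - d‖ ^ 2 : ℝ) : EReal) ≤
          (f y : EReal) + ((1 / 2 * ‖A y - d‖ ^ 2 : ℝ) : EReal)} ⊆
      {x : V | ∀ y : V,
        Sgamma2 (‖A‖ ^ 2) f x + ((1 / 2 * ‖A x - d‖ ^ 2 : ℝ) : EReal) ≤
          Sgamma2 (‖A‖ ^ 2) f y + ((1 / 2 * ‖A y - d‖ ^ 2 : ℝ) : EReal)}) ∧
    (∀ x ∈ {x : V | ∀ y : V,
        Sgamma2 (‖A‖ ^ 2) f x + ((1 / 2 * ‖A x - d‖ ^ 2 : ℝ) : EReal) ≤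
          Sgamma2 (‖A‖ ^ 2) f y + ((1 / 2 * ‖A y - d‖ ^ 2 : ℝ) : EReal)},
      ∃ z ∈ {x : V | ∀ y : V,
          (f x : EReal) + ((1 / 2 * ‖A x - d‖ ^ 2 : ℝ) : EReal) ≤
            (f y : EReal) + ((1 / 2 * ‖A y - d‖ ^ 2 : ℝ) : EReal)},
        z ∈ connectedComponentIn
          {x : V | ∀ y : V,
            Sgamma2 (‖A‖ ^ 2) f x + ((1 / 2 * ‖A x - d‖ ^ 2 : ℝ) : EReal) ≤
              Sgamma2 (‖A‖ ^ 2) f y + ((1 / 2 * ‖A y - d‖ ^ 2 : ℝ) : EReal)} x) :=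
  (statement18_general f hwlsc (pow_pos (norm_pos_iff.2 hA) 2) A le_rfl d).imp_right
    fun hseg x hx => (hseg x hx).imp fun _ hz =>
      hz.imp_right mem_connectedComponentIn_of_segment_subset
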